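/- For any group G and any set of primes π, the class 𝔠(G,π) is closed under forming ℤG-module sections; that is, if A belongs to 𝔠(G,π), then every ℤG-module quotient of every ℤG-submodule of A belongs to 𝔠(G,π). -/

import Mathlib

/-!
Statement 13: the class 𝔠(G, π) is closed under forming ℤG-module sections.
-/

open CategoryTheory

noncomputable section




/-- The rational circle `ℚ/ℤ`. -/
abbrev RatCircle : Type := ℚ ⧸ AddSubgroup.zmultiples (1 : ℚ)

/-- The quasicyclic (Prüfer) `p`-group, realized as the `p`-primary part of `ℚ/ℤ`. -/
def pruferSubgroup (p : ℕ) : AddSubgroup RatCircle where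
  carrier := {x | ∃ n : ℕ, (p ^ n : ℕ) • x = 0}
  zero_mem' := ⟨0, smul_zero _⟩
  add_mem' := by
    rintro a b ⟨m, hm⟩ ⟨n, hn⟩
    refine ⟨m + n, ?_⟩
    have ha : (p ^ m * p ^ n) • a = 0 := by rw [mul_comm, mul_smul, hm, smul_zero]
    have hb : (p ^ m * p ^ n) • b = 0 := by rw [mul_smul, hn, smul_zero]
    rw [smul_add, pow_add, ha, hb, add_zero]
  neg_mem' := by
    rintro a ⟨m, hm⟩
    exact ⟨m, by rw [smul_neg, hm, neg_zero]⟩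

/-- A group has a quasicyclic `p`-section if some quotient of a subgroup is
isomorphic to the Prüfer `p`-group. -/
def HasQuasicyclicSection (G : Type*) [Group G] (p : ℕ) : Prop :=
  ∃ (H : Subgroup G) (K : Subgroup H) (_ : K.Normal),
    Nonempty ((H ⧸ K) ≃* Multiplicative (pruferSubgroup p))

/-- The spectrum of a group: the set of primes `p` such that the group has a
section isomorphic to the quasicyclic `p`-group. -/
def groupSpectrum (G : Type*) [Group G] : Set ℕ :=
  {p | p.Prime ∧ HasQuasicyclicSection G p}

/-- The spectrum of an (additive) abelian group, via `Multiplicative`. -/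
abbrev addSpectrum (A : Type*) [AddGroup A] : Set ℕ :=
  groupSpectrum (Multiplicative A)

/-- An abelian group has finite rank if its torsion-free rank and all of its
`p`-ranks are finite. -/
def FiniteRankAbelian (A : Type*) [AddCommGroup A] : Prop :=
  (∃ n : ℕ, ∀ k : ℕ, (∃ f : (Fin k →₀ ℤ) →+ A, Function.Injective f) → k ≤ n) ∧
  ∀ p : ℕ, p.Prime → {a : A | (p : ℕ) • a = 0}.Finite

/-- A group has finite rank (in the sense appropriate for abelian groups:
finite torsion-free rank and finite `p`-ranks). -/
def FiniteRankGroup (G : Type*) [Group G] : Prop :=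
  (∃ n : ℕ, ∀ k : ℕ,
    (∃ f : Multiplicative (Fin k →₀ ℤ) →* G, Function.Injective f) → k ≤ n) ∧
  ∀ p : ℕ, p.Prime → {g : G | g ^ p = 1}.Finite

/-- A solvable group of finite rank: a solvable group all of whose abelian
sections have finite rank. -/
def SolvableOfFiniteRank (G : Type*) [Group G] : Prop :=
  IsSolvable G ∧
    ∀ (H : Subgroup G) (K : Subgroup H) (_ : K.Normal),
      (∀ x y : H ⧸ K, x * y = y * x) → FiniteRankGroup (H ⧸ K)

/-- A group is virtually abelian. -/
def VirtuallyAbelian (G : Type*) [Group G] : Prop :=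
  ∃ H : Subgroup G, H.index ≠ 0 ∧ ∀ x y : H, x * y = y * x

/-- A `ℤG`-module (given as an object of `Rep ℤ G`) whose underlying abelian group
is torsion-free, of finite rank, and `π`-spectral. -/
def NiceRep {G : Type} [Group G] (π : Set ℕ) (M : Rep.{0} ℤ G) : Prop :=
  (∀ g : M, g ≠ 0 → ¬IsOfFinAddOrder g) ∧ FiniteRankAbelian M ∧ addSpectrum M ⊆ π

/-- The class `𝒰` of solvable groups of finite rank. -/
def MemClassU (G : Type) [Group G] : Prop :=
  SolvableOfFiniteRank G ∧
  ∃ (N : Subgroup G) (_ : N.Normal),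
    Group.IsNilpotent N ∧
    Group.FG (G ⧸ N) ∧ VirtuallyAbelian (G ⧸ N) ∧
    ∃ (r : ℕ) (T : Fin (r + 1) → Subgroup G),
      Monotone T ∧ T 0 = ⊥ ∧
      ((T (Fin.last r) : Set G) = {g : G | g ∈ N ∧ IsOfFinOrder g}) ∧
      (∀ (i : Fin (r + 1)) (g t : G), t ∈ T i → g * t * g⁻¹ ∈ T i) ∧
      (∀ (i : Fin r) (n t : G), n ∈ N → t ∈ T i.succ →
        n * t * n⁻¹ * t⁻¹ ∈ T i.castSucc) ∧
      (∀ i : Fin r, (T i.castSucc).relIndex (T i.succ) = 0 →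
        ∃ M : Rep ℤ (G ⧸ N), NiceRep (groupSpectrum G) M ∧
          ∃ φ : M → G,
            (∀ m : M, φ m ∈ T i.succ) ∧
            (∀ m m' : M, (φ (m + m'))⁻¹ * (φ m * φ m') ∈ T i.castSucc) ∧
            (∀ t : G, t ∈ T i.succ → ∃ m : M, (φ m)⁻¹ * t ∈ T i.castSucc) ∧
            (∀ (g : G) (m : M),
              (φ (M.ρ (QuotientGroup.mk g) m))⁻¹ * (g * φ m * g⁻¹) ∈ T i.castSucc))

/-- The class `𝔠(G, π)`: the smallest class of `ℤG`-modules containing every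
finite `ℤG`-module and every `ℤG`-module whose underlying abelian group is
torsion-free of finite rank and `π`-spectral, and closed under forming
`ℤG`-module quotients and extensions. -/
inductive MemC (G : Type) [Group G] (π : Set ℕ) : Rep ℤ G → Prop
  | of_finite (A : Rep ℤ G) (h : Finite (A : Type)) : MemC G π A
  | of_nice (A : Rep ℤ G) (h : NiceRep π A) : MemC G π A
  | quot (A B : Rep ℤ G) (f : A ⟶ B) (hf : Function.Surjective f.hom)
      (hA : MemC G π A) : MemC G π B
  | ext (A B C : Rep ℤ G) (f : A ⟶ B) (g : B ⟶ C)
      (hinj : Function.Injective f.hom) (hsurj : Function.Surjective g.hom)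
      (hexact : ∀ b : (B : Type), g.hom b = 0 ↔ ∃ a : (A : Type), f.hom a = b)
      (hA : MemC G π A) (hC : MemC G π C) : MemC G π B



section Helpers

local instance repIntModule {G : Type} [Group G] (A : Rep.{0} ℤ G) : Module ℤ A := A.hV2

local instance submoduleIntModule {M : Type} [AddCommGroup M] [Module ℤ M]
    (S : Submodule ℤ M) : Module ℤ S := S.module

lemma HasQuasicyclicSection.of_injective {H G : Type*} [Group H] [Group G] (φ : H →* G)
    (hφ : Function.Injective φ) {p : ℕ} (h : HasQuasicyclicSection H p) :
    HasQuasicyclicSection G p := by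
  obtain ⟨L, K, hK, ⟨e⟩⟩ := h
  let ε : L ≃* L.map φ := L.equivMapOfInjective φ hφ
  have hN : (K.map (ε : L →* L.map φ)).Normal := hK.map _ ε.surjective
  exact ⟨L.map φ, K.map (ε : L →* L.map φ), hN,
    ⟨(QuotientGroup.congr K (K.map (ε : L →* L.map φ)) ε rfl).symm.trans e⟩⟩

lemma NiceRep.of_injective {G : Type} [Group G] {π : Set ℕ} {A B : Rep.{0} ℤ G}
    (f : B →+ A) (hf : Function.Injective f) (h : NiceRep π A) : NiceRep π B := by
  obtain ⟨h1, ⟨⟨n, hn⟩, h3⟩, h4⟩ := h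
  refine ⟨fun g hg hfin => ?_, ⟨⟨n, ?_⟩, ?_⟩, ?_⟩
  · exact h1 (f g) (fun h0 => hg (hf (by rw [h0, map_zero]))) (f.isOfFinAddOrder hfin)
  · rintro k ⟨g, hg⟩
    exact hn k ⟨f.comp g, hf.comp hg⟩
  · intro p hp
    refine ((h3 p hp).preimage (f := f) hf.injOn).subset ?_
    intro a ha
    change p • f a = 0
    change p • a = 0 at ha
    rw [← map_nsmul, ha, map_zero]
  · rintro p ⟨hp, hs⟩
    exact h4 ⟨hp, hs.of_injective (AddMonoidHom.toMultiplicative f) hf⟩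

/-- The inverse image of a subrepresentation under a morphism. -/
def subrepComap {G : Type} [Group G] {A B : Rep.{0} ℤ G} (f : A ⟶ B)
    (S : Subrepresentation B.ρ) : Subrepresentation A.ρ where
  toSubmodule := S.toSubmodule.comap f.hom.toLinearMap
  apply_mem_toSubmodule g v hv := by
    change f.hom (A.ρ g v) ∈ S.toSubmodule
    rw [Rep.hom_comm_apply]
    exact S.apply_mem_toSubmodule g hv

/-- The image of a subrepresentation under a morphism. -/
def subrepMap {G : Type} [Group G] {A B : Rep.{0} ℤ G} (f : A ⟶ B)
    (S : Subrepresentation A.ρ) : Subrepresentation B.ρ where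
  toSubmodule := S.toSubmodule.map f.hom.toLinearMap
  apply_mem_toSubmodule g v hv := by
    obtain ⟨a, ha, rfl⟩ := hv
    exact ⟨A.ρ g a, S.apply_mem_toSubmodule g ha, Rep.hom_comm_apply f g a⟩

/-- The restriction of a morphism to subrepresentations. -/
def subrepRestrict {G : Type} [Group G] {A B : Rep.{0} ℤ G} (f : A ⟶ B)
    (S : Subrepresentation A.ρ) (T : Subrepresentation B.ρ)
    (h : ∀ a ∈ S.toSubmodule, f.hom a ∈ T.toSubmodule) :
    Rep.of S.toRepresentation ⟶ Rep.of T.toRepresentation :=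
  Rep.ofHom (LinearMap.intertwiningMap_of_isIntertwiningMap _ _
    (f.hom.toLinearMap.restrict h)
    (fun g v => Subtype.ext (Rep.hom_comm_apply f g v.1)))

lemma subrepRestrict_coe {G : Type} [Group G] {A B : Rep.{0} ℤ G} (f : A ⟶ B)
    (S : Subrepresentation A.ρ) (T : Subrepresentation B.ρ)
    (h : ∀ a ∈ S.toSubmodule, f.hom a ∈ T.toSubmodule) (x : S.toSubmodule) :
    (((subrepRestrict f S T h).hom x : T.toSubmodule) : B) = f.hom (x : A) := rfl

lemma MemC.subrep {G : Type} [Group G] {π : Set ℕ} {A : Rep.{0} ℤ G} (hA : MemC G π A) :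
    ∀ S : Subrepresentation A.ρ, MemC G π (Rep.of S.toRepresentation) := by
  induction hA with
  | of_finite A h =>
    intro S
    exact MemC.of_finite _ (inferInstanceAs (Finite S.toSubmodule))
  | of_nice A h =>
    intro S
    exact MemC.of_nice _ (NiceRep.of_injective (B := Rep.of S.toRepresentation)
      S.toSubmodule.subtype.toAddMonoidHom Subtype.val_injective h)
  | quot A B f hf hA ih =>
    intro S
    refine MemC.quot _ _ (subrepRestrict f (subrepComap f S) S fun a ha => ha) ?_
      (ih (subrepComap f S))
    rintro ⟨b, hb⟩
    obtain ⟨a, rfl⟩ := hf b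
    exact ⟨⟨a, hb⟩, rfl⟩
  | ext A B C f g hinj hsurj hexact hA hC ihA ihC =>
    intro S
    refine MemC.ext _ _ _ (subrepRestrict f (subrepComap f S) S fun a ha => ha)
      (subrepRestrict g S (subrepMap g S) fun a ha => ⟨a, ha, rfl⟩) ?_ ?_ ?_
      (ihA (subrepComap f S)) (ihC (subrepMap g S))
    · intro x y hxy
      exact Subtype.ext (hinj (congrArg Subtype.val hxy))
    · rintro ⟨_, a, ha, rfl⟩
      exact ⟨⟨a, ha⟩, rfl⟩
    · rintro ⟨b, hb⟩
      constructor
      · intro h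
        obtain ⟨a, rfl⟩ := (hexact b).1 (congrArg Subtype.val h)
        exact ⟨⟨a, hb⟩, rfl⟩
      · rintro ⟨a, ha⟩
        exact Subtype.ext ((hexact b).2 ⟨a.1, congrArg Subtype.val ha⟩)

lemma exists_surjective_of_range {G : Type} [Group G] {A B : Rep.{0} ℤ G} (i : B ⟶ A)
    (hi : Function.Injective i.hom) : ∃ ψ : Rep.of i.hom.range.toRepresentation ⟶ B,
      Function.Surjective ψ.hom := by
  let e : B ≃ₗ[ℤ] LinearMap.range i.hom.toLinearMap :=
    LinearEquiv.ofInjective i.hom.toLinearMap hi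
  refine ⟨Rep.ofHom (LinearMap.intertwiningMap_of_isIntertwiningMap
    i.hom.range.toRepresentation B.ρ e.symm.toLinearMap ?_), e.symm.surjective⟩
  intro g v
  obtain ⟨b, rfl⟩ := e.surjective v
  apply e.injective
  refine (e.apply_symm_apply _).trans ?_
  have h2 : e.symm (e b) = b := e.symm_apply_apply b
  refine Eq.trans ?_ (congrArg (fun z => e (B.ρ g z)) h2.symm)
  exact Subtype.ext (Rep.hom_comm_apply i g b).symm

lemma MemC.sub {G : Type} [Group G] {π : Set ℕ} {A B : Rep.{0} ℤ G} (i : B ⟶ A)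
    (hi : Function.Injective i.hom) (hA : MemC G π A) : MemC G π B := by
  obtain ⟨ψ, hψ⟩ := exists_surjective_of_range i hi
  exact MemC.quot _ _ ψ hψ (hA.subrep i.hom.range)

end Helpers

/-- For any group `G` and any set of primes `π`, the class `𝔠(G, π)` is closed
under forming `ℤG`-module sections: if `A` belongs to `𝔠(G, π)`, `B ⟶ A` is an
injection (realizing `B` as a `ℤG`-submodule of `A`) and `B ⟶ C` is a surjection
(realizing `C` as a `ℤG`-module quotient of `B`), then `C` belongs to
`𝔠(G, π)`. -/
theorem memC_closed_under_sections (G : Type) [Group G] (π : Set ℕ)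
    (A B C : Rep ℤ G) (i : B ⟶ A) (q : B ⟶ C)
    (hA : MemC G π A) (hi : Function.Injective i.hom)
    (hq : Function.Surjective q.hom) : MemC G π C := by
  exact MemC.quot _ _ q hq (hA.sub i hi)
end
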